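/- arXiv:1903.02255 — 2 statements merged into one kernel-verified Lean document; each statement's English description precedes it below -/
import Mathlib

section
/- Singleton Bound via dual distance: for any code C ⊆ F_q^n with minimum distance d and dual distance d', we have q^{d'-1} ≤ |C| ≤ q^{n-d+1}. -/
open Finset

/-- Generalized binomial coefficient `C(z, j) = z(z-1)⋯(z-j+1)/j!` for real `z`. -/
noncomputable def realChoose (z : ℝ) (j : ℕ) : ℝ :=
  (∏ k ∈ Finset.range j, (z - k)) / (Nat.factorial j)

/-- The Krawtchouk polynomial `K_i^{(n,q)}(z)`. -/
noncomputable def kraw (n q i : ℕ) (z : ℝ) : ℝ :=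
  ∑ j ∈ Finset.range (i + 1),
    (-1 : ℝ) ^ j * ((q : ℝ) - 1) ^ (i - j) * (q : ℝ) ^ j *
      ((n - j).choose (n - i) : ℝ) * realChoose z j

/-- The distance distribution `B_i` of a code `C ⊆ F_q^n`. -/
noncomputable def distDistrib {n q : ℕ} (C : Finset (Fin n → Fin q)) (i : ℕ) : ℝ :=
  (((C ×ˢ C).filter (fun p => hammingDist p.1 p.2 = i)).card : ℝ) / (C.card : ℝ)

/-- The dual distance distribution (MacWilliams transform) `B'_i` of a code. -/
noncomputable def dualDistDistrib {n q : ℕ} (C : Finset (Fin n → Fin q)) (i : ℕ) : ℝ :=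
  (∑ j ∈ Finset.range (n + 1), distDistrib C j * kraw n q i j) / (C.card : ℝ)

/-!
Putting `a = X` and `b = 1 + X` in the MacWilliams identity
`∑ B'_i a ^ i b ^ (n - i) = |C|⁻¹ ∑ B_j (b - a) ^ j (b + (q - 1) a) ^ (n - j)` turns the right-hand
side into `|C|⁻¹ ∑ B_j (1 + q X) ^ (n - j)`. If `B'_1 = ⋯ = B'_t = 0`, comparing coefficients of
`X ^ t` gives `|C| (n choose t) = q ^ t ∑ B_j (n - j choose t)`, and the right-hand side is at least
its term `j = 0`, namely `q ^ t (n choose t)`. This is the lower bound, with `t = d' - 1`. The upper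
bound holds because deleting `d - 1` coordinates is injective on `C`.
-/

section BinomialSums

variable {R : Type*} [CommSemiring R]

theorem sum_range_pow_mul_pow_mul_choose {z n : ℕ} (hz : z ≤ n) (u c : R) :
    ∑ j ∈ range (n + 1), u ^ j * c ^ (n - j) * z.choose j = (u + c) ^ z * c ^ (n - z) := by
  have hsub : range (z + 1) ⊆ range (n + 1) := range_subset_range.2 (by lia)
  rw [add_pow, sum_mul, ← sum_subset hsub]
  · refine sum_congr rfl fun j hj => ?_
    have hjz : j ≤ z := mem_range_succ_iff.1 hj
    rw [show n - j = (z - j) + (n - z) by lia, pow_add]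
    ring
  · intro j _ hj
    rw [Nat.choose_eq_zero_of_lt (by simpa using hj), Nat.cast_zero, mul_zero]

theorem sum_Ico_pow_mul_pow_mul_choose {j n : ℕ} (hj : j ≤ n) (u b : R) :
    ∑ i ∈ Ico j (n + 1), u ^ (i - j) * b ^ (n - i) * (n - j).choose (n - i) =
      (u + b) ^ (n - j) := by
  rw [sum_Ico_eq_sum_range, add_pow, Nat.sub_add_comm hj]
  refine sum_congr rfl fun k hk => ?_
  have hk : k ≤ n - j := mem_range_succ_iff.1 hk
  rw [← Nat.sub_sub, Nat.choose_symm hk, Nat.add_sub_cancel_left]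

end BinomialSums

open Polynomial in
theorem coeff_one_add_C_mul_X_pow {R : Type*} [CommSemiring R] (r : R) (m t : ℕ) :
    ((1 + C r * X) ^ m).coeff t = r ^ t * m.choose t := by
  have hcomp : (1 + C r * X) ^ m = ((1 + X) ^ m).comp (C r * X) := by
    rw [pow_comp, add_comp, one_comp, X_comp]
  rw [hcomp, comp_C_mul_X_coeff, coeff_one_add_X_pow, mul_comm]

section Krawtchouk

theorem realChoose_natCast (z j : ℕ) : realChoose z j = z.choose j := by
  rw [realChoose, ← descPochhammer_eval_eq_prod_range, descPochhammer_eval_eq_descFactorial,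
    Nat.descFactorial_eq_factorial_mul_choose, Nat.cast_mul,
    mul_div_cancel_left₀ _ (Nat.cast_ne_zero.2 j.factorial_ne_zero)]

theorem kraw_zero (n q : ℕ) (z : ℝ) : kraw n q 0 z = 1 := by
  simp [kraw, realChoose]

theorem sum_kraw_smul {A : Type*} [CommRing A] [Algebra ℝ A] {z n : ℕ} (q : ℕ) (hz : z ≤ n)
    (a b : A) :
    ∑ i ∈ range (n + 1), kraw n q i z • (a ^ i * b ^ (n - i)) =
      (b - a) ^ z * (b + ((q : A) - 1) * a) ^ (n - z) := by
  have inner (j : ℕ) (hj : j ∈ range (n + 1)) :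
      ∑ i ∈ Ico j (n + 1), ((-1 : ℝ) ^ j * ((q : ℝ) - 1) ^ (i - j) * (q : ℝ) ^ j *
          ((n - j).choose (n - i) : ℝ) * z.choose j) • (a ^ i * b ^ (n - i)) =
        (-(q * a)) ^ j * (b + ((q : A) - 1) * a) ^ (n - j) * z.choose j := by
    rw [add_comm b, ← sum_Ico_pow_mul_pow_mul_choose (mem_range_succ_iff.1 hj), mul_sum, sum_mul]
    refine sum_congr rfl fun i hi => ?_
    rw [← pow_mul_pow_sub a (mem_Ico.1 hi).1, Algebra.smul_def]
    simp only [map_mul, map_pow, map_sub, map_neg, map_one, map_natCast, mul_pow,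
      neg_pow ((q : A) * a)]
    ring
  calc ∑ i ∈ range (n + 1), kraw n q i z • (a ^ i * b ^ (n - i))
      = ∑ j ∈ range (n + 1), (-(q * a)) ^ j * (b + ((q : A) - 1) * a) ^ (n - j) * z.choose j := by
        simp only [kraw, realChoose_natCast, sum_smul]
        rw [← sum_congr rfl inner]
        simp only [range_eq_Ico, sum_Ico_Ico_comm]
    _ = (b - a) ^ z * (b + ((q : A) - 1) * a) ^ (n - z) := by
        rw [sum_range_pow_mul_pow_mul_choose hz]
        ring

-- `n - i` truncates to `0` for `i > n`, so `kraw n q i` need not vanish there.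
theorem kraw_of_le {n i z : ℕ} (q : ℕ) (hz : z ≤ n) (hi : n ≤ i) :
    kraw n q i z = ((q : ℝ) - 1) ^ (i - n) * kraw n q n z := by
  have hsub : range (n + 1) ⊆ range (i + 1) := range_subset_range.2 (by lia)
  simp only [kraw, realChoose_natCast, mul_sum]
  rw [← sum_subset hsub]
  · refine sum_congr rfl fun j hj => ?_
    have hjn : j ≤ n := mem_range_succ_iff.1 hj
    rw [show n - i = n - n by lia, show i - j = (i - n) + (n - j) by lia, pow_add]
    ring
  · intro j _ hj
    have hzj : z < j := by rw [mem_range] at hj; lia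
    rw [Nat.choose_eq_zero_of_lt hzj, Nat.cast_zero, mul_zero]

end Krawtchouk

section DistanceDistribution

variable {n q : ℕ} (C : Finset (Fin n → Fin q))

theorem distDistrib_nonneg (j : ℕ) : 0 ≤ distDistrib C j := by
  unfold distDistrib
  positivity

variable {C} in
theorem distDistrib_zero (hC : C.Nonempty) : distDistrib C 0 = 1 := by
  simp only [distDistrib, hammingDist_eq_zero]
  rw [← diag_eq_filter, diag_card, div_self (Nat.cast_ne_zero.2 hC.card_ne_zero)]

theorem sum_distDistrib : ∑ j ∈ range (n + 1), distDistrib C j = #C := by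
  have hmaps : Set.MapsTo (fun p : (Fin n → Fin q) × (Fin n → Fin q) => hammingDist p.1 p.2)
      (C ×ˢ C : Finset _) (range (n + 1)) := fun p _ =>
    mem_coe.2 <| mem_range_succ_iff.2 <| hammingDist_le_card_fintype.trans_eq (Fintype.card_fin n)
  simp only [distDistrib]
  rw [← sum_div, ← Nat.cast_sum, ← card_eq_sum_card_fiberwise hmaps, card_product, Nat.cast_mul,
    mul_self_div_self]

variable {C} in
theorem dualDistDistrib_zero (hC : C.Nonempty) : dualDistDistrib C 0 = 1 := by
  simp only [dualDistDistrib, kraw_zero, mul_one]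
  rw [sum_distDistrib, div_self (Nat.cast_ne_zero.2 hC.card_ne_zero)]

theorem dualDistDistrib_of_le {i : ℕ} (hi : n ≤ i) :
    dualDistDistrib C i = ((q : ℝ) - 1) ^ (i - n) * dualDistDistrib C n := by
  rw [dualDistDistrib, dualDistDistrib, ← mul_div_assoc, mul_sum]
  congr 1
  refine sum_congr rfl fun j hj => ?_
  rw [kraw_of_le q (mem_range_succ_iff.1 hj) hi, mul_left_comm]

theorem macWilliams_identity {A : Type*} [CommRing A] [Algebra ℝ A] (a b : A) :
    ∑ i ∈ range (n + 1), dualDistDistrib C i • (a ^ i * b ^ (n - i)) =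
      (#C : ℝ)⁻¹ • ∑ j ∈ range (n + 1),
        distDistrib C j • ((b - a) ^ j * (b + ((q : A) - 1) * a) ^ (n - j)) := by
  simp only [dualDistDistrib, div_eq_inv_mul, mul_smul, sum_smul, ← smul_sum]
  rw [sum_comm]
  congr 1
  refine sum_congr rfl fun j hj => ?_
  rw [← sum_kraw_smul q (mem_range_succ_iff.1 hj), smul_sum]

open Polynomial in
theorem sum_dualDistDistrib_mul_choose {t : ℕ} (ht : t ≤ n) :
    ∑ i ∈ range (t + 1), dualDistDistrib C i * (n - i).choose (t - i) =
      (#C : ℝ)⁻¹ * ∑ j ∈ range (n + 1), distDistrib C j * (q ^ t * (n - j).choose t) := by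
  have hgen : ∑ i ∈ range (n + 1), dualDistDistrib C i • ((X : ℝ[X]) ^ i * (1 + X) ^ (n - i)) =
      (#C : ℝ)⁻¹ • ∑ j ∈ range (n + 1),
        distDistrib C j • (1 + Polynomial.C (q : ℝ) * X) ^ (n - j) := by
    have hbase : (1 + X + ((q : ℝ[X]) - 1) * X) = 1 + Polynomial.C (q : ℝ) * X := by
      rw [map_natCast]
      ring
    simp only [macWilliams_identity, add_sub_cancel_right, one_pow, one_mul, hbase]
  have hcoeff := congrArg (coeff · t) hgen
  simp only [finsetSum_coeff, coeff_smul, smul_eq_mul, coeff_X_pow_mul', coeff_one_add_X_pow,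
    coeff_one_add_C_mul_X_pow, mul_ite, mul_zero, ← sum_filter] at hcoeff
  have hfilter : {i ∈ range (n + 1) | i ≤ t} = range (t + 1) := by
    ext i
    simp only [mem_filter, mem_range]
    lia
  rwa [hfilter] at hcoeff

variable {C} in
theorem pow_le_card_of_dualDistDistrib_eq_zero {t : ℕ} (hC : C.Nonempty) (ht : t ≤ n)
    (hzero : ∀ i, 1 ≤ i → i ≤ t → dualDistDistrib C i = 0) : q ^ t ≤ #C := by
  have hcard : (0 : ℝ) < #C := Nat.cast_pos.2 hC.card_pos
  have hchoose : (0 : ℝ) < n.choose t := Nat.cast_pos.2 (Nat.choose_pos ht)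
  have hdual : ∑ i ∈ range (t + 1), dualDistDistrib C i * (n - i).choose (t - i) =
      n.choose t := by
    rw [sum_eq_single_of_mem 0 (by simp), dualDistDistrib_zero hC, one_mul, Nat.sub_zero,
      Nat.sub_zero]
    intro i hi hi0
    rw [hzero i (Nat.pos_of_ne_zero hi0) (mem_range_succ_iff.1 hi), zero_mul]
  have hdist : (q : ℝ) ^ t * n.choose t ≤
      ∑ j ∈ range (n + 1), distDistrib C j * (q ^ t * (n - j).choose t) := by
    have hterm := single_le_sum
      (f := fun j => distDistrib C j * ((q : ℝ) ^ t * (n - j).choose t))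
      (fun j _ => mul_nonneg (distDistrib_nonneg C j) (by positivity))
      (mem_range.2 n.succ_pos)
    simpa only [distDistrib_zero hC, one_mul, Nat.sub_zero] using hterm
  rw [sum_dualDistDistrib_mul_choose C ht, inv_mul_eq_iff_eq_mul₀ hcard.ne'] at hdual
  exact_mod_cast le_of_mul_le_mul_right (hdist.trans_eq hdual) hchoose

end DistanceDistribution

section Puncturing

variable {ι : Type*} [Fintype ι]

theorem hammingDist_le_card_compl [DecidableEq ι] {β : ι → Type*} [∀ i, DecidableEq (β i)]
    {x y : ∀ i, β i} {s : Finset ι} (h : ∀ i ∈ s, x i = y i) : hammingDist x y ≤ #sᶜ :=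
  card_le_card fun i hi => mem_compl.2 fun his => (mem_filter.1 hi).2 (h i his)

variable {α : Type*} [Fintype α] [DecidableEq α] {C : Finset (ι → α)} {d : ℕ}

theorem card_le_pow_card_of_card_compl_lt [DecidableEq ι] (s : Finset ι) (hs : #sᶜ < d)
    (hd : ∀ x ∈ C, ∀ y ∈ C, x ≠ y → d ≤ hammingDist x y) :
    #C ≤ Fintype.card α ^ #s := by
  have hinj : Set.InjOn s.restrict (C : Set (ι → α)) := by
    intro x hx y hy hxy
    by_contra hne
    have hagree : ∀ i ∈ s, x i = y i := fun i hi => congrFun hxy ⟨i, hi⟩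
    exact absurd (hd x hx y hy hne) ((hammingDist_le_card_compl hagree).trans_lt hs).not_ge
  calc #C ≤ #(univ : Finset (s → α)) := card_le_card_of_injOn _ (fun _ _ => mem_univ _) hinj
    _ = Fintype.card α ^ #s := by simp

theorem card_le_pow_of_le_hammingDist (hd_pos : 0 < d) (hd_le : d ≤ Fintype.card ι)
    (hd : ∀ x ∈ C, ∀ y ∈ C, x ≠ y → d ≤ hammingDist x y) :
    #C ≤ Fintype.card α ^ (Fintype.card ι - d + 1) := by
  classical
  obtain ⟨s, -, hs⟩ : ∃ s ⊆ (univ : Finset ι), #s = Fintype.card ι - d + 1 :=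
    exists_subset_card_eq (by rw [card_univ]; lia)
  rw [← hs]
  exact card_le_pow_card_of_card_compl_lt s (by rw [card_compl]; lia) hd

end Puncturing

theorem singleton_bound_with_dual (n q d d' : ℕ) (hn : 1 ≤ n) (hq : 2 ≤ q)
    (C : Finset (Fin n → Fin q)) (hC : 2 ≤ C.card)
    -- `d` is the minimum distance of `C`
    (hd_le : ∀ x ∈ C, ∀ y ∈ C, x ≠ y → d ≤ hammingDist x y)
    (hd_ex : ∃ x ∈ C, ∃ y ∈ C, x ≠ y ∧ hammingDist x y = d)
    -- `d'` is the dual distance of `C`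
    (hd'1 : 1 ≤ d') (hd'ne : dualDistDistrib C d' ≠ 0)
    (hd'min : ∀ i : ℕ, 1 ≤ i → i < d' → dualDistDistrib C i = 0) :
    q ^ (d' - 1) ≤ C.card ∧ C.card ≤ q ^ (n - d + 1) := by
  have hCne : C.Nonempty := card_pos.1 (by lia)
  constructor
  · have hd'n : d' ≤ n := by
      by_contra! hlt
      rw [dualDistDistrib_of_le C hlt.le, hd'min n hn hlt, mul_zero] at hd'ne
      exact hd'ne rfl
    exact pow_le_card_of_dualDistDistrib_eq_zero hCne (by lia)
      fun i hi hit => hd'min i hi (by lia)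
  · obtain ⟨x, -, y, -, hxy, rfl⟩ := hd_ex
    simpa only [Fintype.card_fin] using
      card_le_pow_of_le_hammingDist (hammingDist_pos.2 hxy) hammingDist_le_card_fintype hd_le
end

section
/- LP bound for spherical designs: let n ≥ 2, τ ≥ 1, and f a real polynomial with f(t) ≥ 0 on [-1,1] and Gegenbauer expansion f = Σ f_i P_i^{(n)} with f_0 > 0 and f_i ≤ 0 for i > τ. Then every spherical τ-design C ⊂ S^{n-1} satisfies |C| ≥ f(1)/f_0. -/
open Finset

/-- The Gegenbauer polynomials `P_i^{(n)}(t)` normalized by `P_i^{(n)}(1) = 1`,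
defined by the recurrence `(i+n-2) P_{i+1} = (2i+n-2) t P_i - i P_{i-1}`. -/
noncomputable def geg (n : ℕ) : ℕ → ℝ → ℝ
  | 0, _ => 1
  | 1, t => t
  | (i + 2), t =>
      ((2 * ((i : ℝ) + 1) + (n : ℝ) - 2) * t * geg n (i + 1) t
        - ((i : ℝ) + 1) * geg n i t) / (((i : ℝ) + 1) + (n : ℝ) - 2)

open MeasureTheory

/-- The normalized surface measure on the unit sphere of `EuclideanSpace ℝ (Fin n)`. -/
noncomputable def sphereMeasure (n : ℕ) :
    Measure (Metric.sphere (0 : EuclideanSpace ℝ (Fin n)) 1) :=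
  ((volume : Measure (EuclideanSpace ℝ (Fin n))).toSphere Set.univ)⁻¹ •
    (volume : Measure (EuclideanSpace ℝ (Fin n))).toSphere

/-- `C` is a spherical `τ`-design: averages of polynomials of degree at most `τ`
over `C` agree with their integrals with respect to the normalized surface measure. -/
def IsSphericalDesign (n τ : ℕ) (C : Finset (Metric.sphere (0 : EuclideanSpace ℝ (Fin n)) 1)) :
    Prop :=
  ∀ p : MvPolynomial (Fin n) ℝ, p.totalDegree ≤ τ →
    (∑ x ∈ C, MvPolynomial.eval (fun i => (x : EuclideanSpace ℝ (Fin n)) i) p) / (C.card : ℝ) =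
      ∫ x, MvPolynomial.eval (fun i => (x : EuclideanSpace ℝ (Fin n)) i) p ∂(sphereMeasure n)

open scoped RealInnerProductSpace

/-!
Count `∑ x ∈ C, ∑ y ∈ C, f ⟪x, y⟫` in two ways. Its diagonal alone gives at least `|C| f(1)`, since
`f ≥ 0` on `[-1, 1]`. In the Gegenbauer expansion the term of index `0` contributes `c 0 * |C|²`,
the terms with `1 ≤ i ≤ τ` vanish by the design property, and those with `i > τ` are nonpositive
because `geg n i` is positive definite on the sphere.

Both facts about `geg n i` come from the zonal harmonic `Z x i`, a harmonic homogeneous polynomial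
of degree `i` with value `geg n i ⟪x, y⟫` at a unit vector `y`. It reproduces harmonic polynomials
for the Fischer form, `fischerForm (Z x i) h = κ h(x)` with `κ > 0`, so the Gegenbauer kernel is a
Gram matrix. Its spherical mean vanishes for `i ≥ 1`: the Gaussian integral of `p` satisfies
`∫ Δp = k ∫ p` when `p` is homogeneous of degree `k`, and in polar coordinates it is a nonzero
multiple of the spherical mean.
-/

section DifferentialOperators

open MvPolynomial

variable {σ R : Type*} [CommSemiring R]

/-- The derivative of a polynomial in the constant direction `v`. -/
noncomputable def dirDeriv (v : σ → R) : Derivation R (MvPolynomial σ R) (MvPolynomial σ R) :=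
  mkDerivation R fun j => C (v j)

lemma dirDeriv_X (v : σ → R) (j : σ) : dirDeriv v (X j) = C (v j) :=
  mkDerivation_X _ _ _

lemma dirDeriv_single [DecidableEq σ] (j : σ) :
    dirDeriv (Pi.single j (1 : R)) = pderiv j :=
  derivation_ext fun i => by
    rw [dirDeriv_X, pderiv_X, Pi.single_apply, Pi.single_apply, apply_ite C, C_1, C_0]

lemma dirDeriv_pderiv_comm (v : σ → R) (j : σ) (p : MvPolynomial σ R) :
    dirDeriv v (pderiv j p) = pderiv j (dirDeriv v p) := by
  classical
  induction p using MvPolynomial.induction_on with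
  | C a => simp [dirDeriv]
  | add p q hp hq => simp only [map_add, hp, hq]
  | mul_X p i hp =>
    have dirDeriv_pderiv_X : dirDeriv v (pderiv j (X i)) = 0 := by
      by_cases h : i = j <;> simp [pderiv_X, h]
    simp only [Derivation.leibniz, smul_eq_mul, map_add, dirDeriv_X, hp, dirDeriv_pderiv_X,
      pderiv_C, mul_zero, zero_add]
    ring

lemma dirDeriv_C_mul (v : σ → R) (a : R) (p : MvPolynomial σ R) :
    dirDeriv v (C a * p) = C a * dirDeriv v p := by
  rw [C_mul', Derivation.map_smul, C_mul']

lemma dirDeriv_eq_sum [Fintype σ] (v : σ → R) (p : MvPolynomial σ R) :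
    dirDeriv v p = ∑ j, C (v j) * pderiv j p := by
  classical
  induction p using MvPolynomial.induction_on with
  | C a => simp [dirDeriv]
  | add p q hp hq => simp only [map_add, mul_add, Finset.sum_add_distrib, hp, hq]
  | mul_X p i hp =>
    simp only [Derivation.leibniz, smul_eq_mul, dirDeriv_X, hp, pderiv_X, Pi.single_apply, mul_add,
      ite_mul, one_mul, zero_mul, mul_ite, mul_zero, Finset.sum_add_distrib, Finset.sum_ite_eq,
      Finset.mem_univ, if_true, Finset.mul_sum, mul_left_comm, mul_comm p]

lemma isHomogeneous_dirDeriv [Finite σ] {k : ℕ} {p : MvPolynomial σ R}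
    (hp : p.IsHomogeneous (k + 1)) (v : σ → R) : (dirDeriv v p).IsHomogeneous k := by
  cases nonempty_fintype σ
  rw [dirDeriv_eq_sum]
  exact IsHomogeneous.sum _ _ _ fun j _ => hp.pderiv.C_mul (v j)

lemma eval_dirDeriv_self [Finite σ] {k : ℕ} {p : MvPolynomial σ R} (hp : p.IsHomogeneous k)
    (v : σ → R) : eval v (dirDeriv v p) = k * eval v p := by
  cases nonempty_fintype σ
  simpa [dirDeriv_eq_sum] using congrArg (eval v) hp.sum_X_mul_pderiv

variable [Fintype σ]

/-- The linear form `y ↦ v ⬝ᵥ y` as a polynomial. -/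
noncomputable def linearForm (v : σ → R) : MvPolynomial σ R := ∑ j, C (v j) * X j

variable (σ R) in
/-- The quadratic form `y ↦ y ⬝ᵥ y` as a polynomial. -/
noncomputable def normSqForm : MvPolynomial σ R := ∑ j, X j ^ 2

variable (σ R) in
/-- The Laplace operator `∑ j, ∂ⱼ²` on polynomials. -/
noncomputable def polyLaplacian : MvPolynomial σ R →ₗ[R] MvPolynomial σ R :=
  ∑ j, (pderiv j).toLinearMap ∘ₗ (pderiv j).toLinearMap

lemma polyLaplacian_apply (p : MvPolynomial σ R) :
    polyLaplacian σ R p = ∑ j, pderiv j (pderiv j p) := by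
  simp [polyLaplacian]

lemma polyLaplacian_C_mul (a : R) (p : MvPolynomial σ R) :
    polyLaplacian σ R (C a * p) = C a * polyLaplacian σ R p := by
  rw [C_mul', map_smul, C_mul']

lemma eval_linearForm (v y : σ → R) : eval y (linearForm v) = v ⬝ᵥ y := by
  simp [linearForm, dotProduct]

lemma eval_normSqForm (y : σ → R) : eval y (normSqForm σ R) = y ⬝ᵥ y := by
  simp [normSqForm, dotProduct, sq]

lemma isHomogeneous_linearForm (v : σ → R) : (linearForm v).IsHomogeneous 1 :=
  IsHomogeneous.sum _ _ _ fun j _ => isHomogeneous_C_mul_X (v j) j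

lemma isHomogeneous_normSqForm : (normSqForm σ R).IsHomogeneous 2 :=
  IsHomogeneous.sum _ _ _ fun j _ => isHomogeneous_X_pow j 2

lemma pderiv_linearForm (v : σ → R) (j : σ) : pderiv j (linearForm v) = C (v j) := by
  classical
  simp [linearForm, pderiv_X, Pi.single_apply]

lemma pderiv_normSqForm (j : σ) : pderiv j (normSqForm σ R) = 2 * X j := by
  classical
  simp [normSqForm, pderiv_X, Pi.single_apply]

lemma dirDeriv_linearForm (v w : σ → R) : dirDeriv v (linearForm w) = C (v ⬝ᵥ w) := by
  simp [dirDeriv_eq_sum, pderiv_linearForm, dotProduct]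

lemma dirDeriv_normSqForm (v : σ → R) : dirDeriv v (normSqForm σ R) = 2 * linearForm v := by
  simp only [dirDeriv_eq_sum, pderiv_normSqForm, linearForm, Finset.mul_sum, mul_left_comm]

lemma linearForm_single [DecidableEq σ] (j : σ) : linearForm (Pi.single j (1 : R)) = X j := by
  simp [linearForm, Pi.single_apply]

lemma polyLaplacian_dirDeriv (v : σ → R) (p : MvPolynomial σ R) :
    polyLaplacian σ R (dirDeriv v p) = dirDeriv v (polyLaplacian σ R p) := by
  simp only [polyLaplacian_apply, map_sum, dirDeriv_pderiv_comm]

lemma polyLaplacian_linearForm_mul (v : σ → R) (p : MvPolynomial σ R) :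
    polyLaplacian σ R (linearForm v * p) =
      linearForm v * polyLaplacian σ R p + 2 * dirDeriv v p := by
  simp only [polyLaplacian_apply, dirDeriv_eq_sum, Finset.mul_sum, ← Finset.sum_add_distrib]
  refine Finset.sum_congr rfl fun j _ => ?_
  simp only [pderiv_mul, pderiv_linearForm, map_add, pderiv_C]
  ring

lemma polyLaplacian_normSqForm_mul {k : ℕ} {p : MvPolynomial σ R} (hp : p.IsHomogeneous k) :
    polyLaplacian σ R (normSqForm σ R * p) =
      normSqForm σ R * polyLaplacian σ R p + (4 * k + 2 * Fintype.card σ) * p := by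
  have second_pderiv (j : σ) : pderiv j (pderiv j (normSqForm σ R * p)) =
      normSqForm σ R * pderiv j (pderiv j p) + 4 * (X j * pderiv j p) + 2 * p := by
    have pderiv_two : pderiv j (2 : MvPolynomial σ R) = 0 := pderiv_C (a := 2)
    simp only [pderiv_mul, pderiv_normSqForm, map_add, pderiv_two, pderiv_X_self]
    ring
  simp only [polyLaplacian_apply, second_pderiv, Finset.sum_add_distrib, ← Finset.mul_sum,
    hp.sum_X_mul_pderiv, Finset.sum_const, Finset.card_univ, nsmul_eq_mul]
  ring

end DifferentialOperators

section FischerForm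

open MvPolynomial
open scoped Nat

variable {σ R : Type*} [Fintype σ] [CommSemiring R]

/-- The Fischer form `∑ m, m! pₘ qₘ` on polynomials, for which multiplication by `X j` is adjoint
to `∂ⱼ`. -/
noncomputable def fischerForm : MvPolynomial σ R →ₗ[R] MvPolynomial σ R →ₗ[R] R :=
  (basisMonomials σ R).constr R fun m => ((∏ j, (m j)! : ℕ) : R) • lcoeff R m

lemma fischerForm_monomial (m : σ →₀ ℕ) (a : R) (q : MvPolynomial σ R) :
    fischerForm (monomial m a) q = a * ((∏ j, (m j)! : ℕ) * coeff m q) := by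
  have h := (basisMonomials σ R).constr_basis R
    (fun m => ((∏ j, (m j)! : ℕ) : R) • lcoeff R m) m
  rw [coe_basisMonomials] at h
  rw [← mul_one a, ← smul_eq_mul, ← smul_monomial, map_smul, fischerForm, h]
  simp

lemma prod_factorial_add_single (m : σ →₀ ℕ) (j : σ) :
    ∏ k, ((m + Finsupp.single j 1 : σ →₀ ℕ) k)! = (m j + 1) * ∏ k, (m k)! := by
  classical
  calc ∏ k, ((m + Finsupp.single j 1 : σ →₀ ℕ) k)!
      = ∏ k, (if k = j then m j + 1 else 1) * (m k)! := by
        refine Finset.prod_congr rfl fun k _ => ?_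
        rcases eq_or_ne k j with rfl | hk
        · simp [Nat.factorial_succ]
        · simp [hk]
    _ = (m j + 1) * ∏ k, (m k)! := by
        simp only [Finset.prod_mul_distrib, Finset.prod_ite_eq', Finset.mem_univ, if_true]

lemma fischerForm_X_mul (j : σ) (p q : MvPolynomial σ R) :
    fischerForm (X j * p) q = fischerForm p (pderiv j q) := by
  induction p using MvPolynomial.induction_on' with
  | monomial m a =>
    rw [X, monomial_mul, one_mul, add_comm, fischerForm_monomial, fischerForm_monomial,
      prod_factorial_add_single, coeff_pderiv]
    push_cast
    ring
  | add p₁ p₂ h₁ h₂ => simp only [mul_add, map_add, LinearMap.add_apply, h₁, h₂]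

lemma fischerForm_C_mul (a : R) (p q : MvPolynomial σ R) :
    fischerForm (C a * p) q = a * fischerForm p q := by
  rw [C_mul', map_smul, LinearMap.smul_apply, smul_eq_mul]

lemma fischerForm_linearForm_mul (v : σ → R) (p q : MvPolynomial σ R) :
    fischerForm (linearForm v * p) q = fischerForm p (dirDeriv v q) := by
  simp only [linearForm, Finset.sum_mul, mul_assoc, map_sum, LinearMap.sum_apply,
    fischerForm_C_mul, fischerForm_X_mul, dirDeriv_eq_sum]
  simp only [C_mul', map_smul, smul_eq_mul]

lemma fischerForm_normSqForm_mul (p q : MvPolynomial σ R) :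
    fischerForm (normSqForm σ R * p) q = fischerForm p (polyLaplacian σ R q) := by
  simp only [normSqForm, Finset.sum_mul, sq, mul_assoc, map_sum, LinearMap.sum_apply,
    fischerForm_X_mul, polyLaplacian_apply]

lemma fischerForm_apply (p q : MvPolynomial σ R) :
    fischerForm p q = ∑ m ∈ p.support, coeff m p * ((∏ j, (m j)! : ℕ) * coeff m q) := by
  nth_rw 1 [p.as_sum]
  simp only [map_sum, LinearMap.sum_apply, fischerForm_monomial]

lemma fischerForm_self_nonneg [LinearOrder R] [IsStrictOrderedRing R] [ExistsAddOfLE R]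
    (p : MvPolynomial σ R) :
    0 ≤ fischerForm p p := by
  rw [fischerForm_apply]
  refine Finset.sum_nonneg fun m _ => ?_
  rw [mul_left_comm]
  exact mul_nonneg (Nat.cast_nonneg _) (mul_self_nonneg _)

end FischerForm

section ZonalHarmonic

open MvPolynomial

variable {σ : Type*} [Fintype σ]

/-- The zonal harmonic of degree `i` with pole `x`: the polynomial in `y` obtained by homogenizing
`geg n i ⟪x, y⟫` with `|x|²` and `|y|²`, where `n` is the number of variables. For `n = 1` the
denominator vanishes at `i = 0`, so the definition is meaningful for `n ≥ 2` only. -/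
noncomputable def zonalHarmonic (x : σ → ℝ) : ℕ → MvPolynomial σ ℝ
  | 0 => 1
  | 1 => linearForm x
  | i + 2 => C ((i + Fintype.card σ - 1 : ℝ)⁻¹) *
      (C (2 * i + Fintype.card σ : ℝ) * (linearForm x * zonalHarmonic x (i + 1)) -
        C ((i + 1) * (x ⬝ᵥ x)) * (normSqForm σ ℝ * zonalHarmonic x i))

lemma isHomogeneous_zonalHarmonic (x : σ → ℝ) (i : ℕ) : (zonalHarmonic x i).IsHomogeneous i := by
  induction i using Nat.twoStepInduction with
  | zero => exact isHomogeneous_one _ _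
  | one => exact isHomogeneous_linearForm x
  | more i ih₀ ih₁ =>
    have linear_part := (isHomogeneous_linearForm x).mul ih₁
    have norm_part := (isHomogeneous_normSqForm (R := ℝ)).mul ih₀
    rw [show 1 + (i + 1) = i + 2 by ring] at linear_part
    rw [add_comm] at norm_part
    exact ((linear_part.C_mul _).sub (norm_part.C_mul _)).C_mul _

lemma eval_zonalHarmonic {x y : σ → ℝ} (hx : x ⬝ᵥ x = 1) (hy : y ⬝ᵥ y = 1) (i : ℕ) :
    eval y (zonalHarmonic x i) = geg (Fintype.card σ) i (x ⬝ᵥ y) := by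
  induction i using Nat.twoStepInduction with
  | zero => simp [zonalHarmonic, geg]
  | one => simp [zonalHarmonic, geg, eval_linearForm]
  | more i ih₀ ih₁ =>
    simp only [zonalHarmonic, geg, map_mul, map_sub, eval_C, eval_linearForm, eval_normSqForm,
      ih₀, ih₁, hx, hy]
    ring

variable [Nontrivial σ]

lemma add_card_sub_one_pos (i : ℕ) : (0 : ℝ) < i + Fintype.card σ - 1 := by
  have one_lt_card : (1 : ℝ) < Fintype.card σ := mod_cast Fintype.one_lt_card
  linarith [(Nat.cast_nonneg i : (0 : ℝ) ≤ i)]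

lemma zonalHarmonic_recurrence (x : σ → ℝ) (i : ℕ) :
    C (i + Fintype.card σ - 1 : ℝ) * zonalHarmonic x (i + 2) =
      C (2 * i + Fintype.card σ : ℝ) * (linearForm x * zonalHarmonic x (i + 1)) -
        C ((i + 1) * (x ⬝ᵥ x)) * (normSqForm σ ℝ * zonalHarmonic x i) := by
  rw [zonalHarmonic, ← mul_assoc, ← C_mul, mul_inv_cancel₀ (add_card_sub_one_pos i).ne', C_1,
    one_mul]

lemma C_add_card_sub_one_ne_zero (i : ℕ) :
    C (i + Fintype.card σ - 1 : ℝ) ≠ (0 : MvPolynomial σ ℝ) :=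
  C_ne_zero.2 (add_card_sub_one_pos i).ne'

lemma dirDeriv_zonalHarmonic_succ (x : σ → ℝ) (i : ℕ) :
    dirDeriv x (zonalHarmonic x (i + 1)) = C ((i + 1) * (x ⬝ᵥ x)) * zonalHarmonic x i := by
  induction i using Nat.twoStepInduction with
  | zero => simp [zonalHarmonic, dirDeriv_linearForm]
  | one =>
    apply mul_left_cancel₀ (C_add_card_sub_one_ne_zero (σ := σ) 0)
    rw [← dirDeriv_C_mul, zonalHarmonic_recurrence, map_sub, dirDeriv_C_mul, dirDeriv_C_mul]
    simp only [zonalHarmonic, Derivation.leibniz, smul_eq_mul, dirDeriv_linearForm,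
      dirDeriv_normSqForm, Derivation.map_one_eq_zero, map_sub, map_add, map_mul, map_natCast,
      map_one, map_ofNat]
    push_cast
    ring
  | more i ih₀ ih₁ =>
    have previous := zonalHarmonic_recurrence x i
    apply mul_left_cancel₀ (C_add_card_sub_one_ne_zero (σ := σ) (i + 1))
    rw [← dirDeriv_C_mul, zonalHarmonic_recurrence, map_sub, dirDeriv_C_mul, dirDeriv_C_mul]
    simp only [Derivation.leibniz, smul_eq_mul, dirDeriv_linearForm, dirDeriv_normSqForm, ih₀, ih₁]
    simp only [map_sub, map_add, map_mul, map_natCast, map_one, map_ofNat] at previous ⊢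
    push_cast
    linear_combination (-(i + 2) * C (x ⬝ᵥ x)) * previous

lemma polyLaplacian_zonalHarmonic (x : σ → ℝ) (i : ℕ) :
    polyLaplacian σ ℝ (zonalHarmonic x i) = 0 := by
  induction i using Nat.twoStepInduction with
  | zero => simp [zonalHarmonic, polyLaplacian_apply]
  | one => simp [zonalHarmonic, polyLaplacian_apply, pderiv_linearForm]
  | more i ih₀ ih₁ =>
    apply mul_left_cancel₀ (C_add_card_sub_one_ne_zero (σ := σ) i)
    rw [← polyLaplacian_C_mul, zonalHarmonic_recurrence, map_sub, polyLaplacian_C_mul,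
      polyLaplacian_C_mul, polyLaplacian_linearForm_mul,
      polyLaplacian_normSqForm_mul (isHomogeneous_zonalHarmonic x i), ih₀, ih₁,
      dirDeriv_zonalHarmonic_succ]
    simp only [map_add, map_mul, map_natCast, map_one, map_ofNat]
    ring

-- Harmonic polynomials are orthogonal to multiples of `normSqForm` for the Fischer form, so only
-- the first summand matters when pairing a zonal harmonic with a harmonic polynomial.
lemma exists_zonalHarmonic_succ_eq (i : ℕ) :
    ∃ a : ℝ, 0 < a ∧ ∀ x : σ → ℝ, ∃ q, zonalHarmonic x (i + 1) =
      C a * (linearForm x * zonalHarmonic x i) + normSqForm σ ℝ * q := by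
  cases i with
  | zero => exact ⟨1, one_pos, fun x => ⟨0, by simp [zonalHarmonic]⟩⟩
  | succ i =>
    have denom_pos := add_card_sub_one_pos (σ := σ) i
    refine ⟨(i + Fintype.card σ - 1 : ℝ)⁻¹ * (2 * i + Fintype.card σ), by positivity, fun x =>
      ⟨-(C ((i + Fintype.card σ - 1 : ℝ)⁻¹ * ((i + 1) * (x ⬝ᵥ x))) * zonalHarmonic x i), ?_⟩⟩
    rw [zonalHarmonic]
    simp only [C_mul]
    ring

lemma exists_fischerForm_zonalHarmonic_eq_mul_eval (i : ℕ) :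
    ∃ κ : ℝ, 0 < κ ∧ ∀ (x : σ → ℝ) (h : MvPolynomial σ ℝ), h.IsHomogeneous i →
      polyLaplacian σ ℝ h = 0 → fischerForm (zonalHarmonic x i) h = κ * eval x h := by
  induction i with
  | zero =>
    refine ⟨1, one_pos, fun x h h_hom _ => ?_⟩
    have h_const : h = C (coeff 0 h) :=
      totalDegree_eq_zero_iff_eq_C.1 ((totalDegree_zero_iff_isHomogeneous σ).2 h_hom)
    rw [zonalHarmonic, ← C_1, C_apply, fischerForm_monomial, h_const]
    simp
  | succ i ih =>
    obtain ⟨κ, κ_pos, reproducing⟩ := ih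
    obtain ⟨a, a_pos, zonal_eq⟩ := exists_zonalHarmonic_succ_eq (σ := σ) i
    refine ⟨a * κ * (i + 1), by positivity, fun x h h_hom h_harm => ?_⟩
    obtain ⟨q, hq⟩ := zonal_eq x
    have dirDeriv_harm : polyLaplacian σ ℝ (dirDeriv x h) = 0 := by
      rw [polyLaplacian_dirDeriv, h_harm, map_zero]
    calc fischerForm (zonalHarmonic x (i + 1)) h
        = a * fischerForm (zonalHarmonic x i) (dirDeriv x h) := by
          rw [hq, map_add, LinearMap.add_apply, fischerForm_C_mul, fischerForm_linearForm_mul,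
            fischerForm_normSqForm_mul, h_harm, map_zero, add_zero]
      _ = a * (κ * eval x (dirDeriv x h)) := by
          rw [reproducing x _ (isHomogeneous_dirDeriv h_hom x) dirDeriv_harm]
      _ = a * κ * (i + 1) * eval x h := by
          rw [eval_dirDeriv_self h_hom]
          push_cast
          ring

lemma sum_sum_geg_nonneg {ι : Type*} (s : Finset ι) (w : ι → ℝ) {v : ι → σ → ℝ}
    (hv : ∀ a ∈ s, v a ⬝ᵥ v a = 1) (i : ℕ) :
    0 ≤ ∑ a ∈ s, ∑ b ∈ s, w a * w b * geg (Fintype.card σ) i (v a ⬝ᵥ v b) := by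
  obtain ⟨κ, κ_pos, reproducing⟩ := exists_fischerForm_zonalHarmonic_eq_mul_eval (σ := σ) i
  set h := ∑ b ∈ s, C (w b) * zonalHarmonic (v b) i with h_def
  have h_hom : h.IsHomogeneous i :=
    IsHomogeneous.sum _ _ _ fun b _ => (isHomogeneous_zonalHarmonic (v b) i).C_mul _
  have h_harm : polyLaplacian σ ℝ h = 0 := by
    simp [h_def, C_mul', polyLaplacian_zonalHarmonic]
  have eval_h (a : ι) (ha : a ∈ s) :
      eval (v a) h = ∑ b ∈ s, w b * geg (Fintype.card σ) i (v a ⬝ᵥ v b) := by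
    simp only [h_def, map_sum, map_mul, eval_C]
    refine Finset.sum_congr rfl fun b hb => ?_
    rw [eval_zonalHarmonic (hv b hb) (hv a ha), dotProduct_comm]
  have fischer_eq : fischerForm h h =
      κ * ∑ a ∈ s, ∑ b ∈ s, w a * w b * geg (Fintype.card σ) i (v a ⬝ᵥ v b) := calc
    fischerForm h h = ∑ a ∈ s, w a * fischerForm (zonalHarmonic (v a) i) h := by
        nth_rw 1 [h_def]
        simp only [map_sum, LinearMap.sum_apply, fischerForm_C_mul]
    _ = ∑ a ∈ s, w a * (κ * ∑ b ∈ s, w b * geg (Fintype.card σ) i (v a ⬝ᵥ v b)) := by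
        refine Finset.sum_congr rfl fun a ha => ?_
        rw [reproducing _ h h_hom h_harm, eval_h a ha]
    _ = _ := by
        simp only [Finset.mul_sum, mul_left_comm, mul_assoc]
  exact nonneg_of_mul_nonneg_right (fischer_eq ▸ fischerForm_self_nonneg h) κ_pos

end ZonalHarmonic

section GaussianIntegral

open MvPolynomial

lemma eval_smul_of_isHomogeneous {σ R : Type*} [CommSemiring R] {k : ℕ} {p : MvPolynomial σ R}
    (hp : p.IsHomogeneous k) (r : R) (y : σ → R) : eval (r • y) p = r ^ k * eval y p := by
  simp only [eval_eq, Finset.mul_sum]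
  refine Finset.sum_congr rfl fun d hd => ?_
  simp only [Pi.smul_apply, smul_eq_mul, mul_pow, Finset.prod_mul_distrib,
    Finset.prod_pow_eq_pow_sum, hp.degree_eq_sum_deg_support hd]
  rw [mul_left_comm]

lemma hasLineDerivAt_eval {σ 𝕜 : Type*} [NontriviallyNormedField 𝕜] (p : MvPolynomial σ 𝕜)
    (y v : σ → 𝕜) :
    HasLineDerivAt 𝕜 (fun z : σ → 𝕜 => eval z p) (eval y (dirDeriv v p)) y v := by
  unfold HasLineDerivAt
  induction p using MvPolynomial.induction_on with
  | C a => simpa [dirDeriv] using hasDerivAt_const (0 : 𝕜) a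
  | add p q hp hq => simpa using hp.fun_add hq
  | mul_X p i hp =>
    have hasDerivAt_coord : HasDerivAt (fun t => y i + t * v i) (v i) (0 : 𝕜) := by
      simpa using ((hasDerivAt_id (0 : 𝕜)).mul_const (v i)).const_add (y i)
    simpa [Derivation.leibniz, dirDeriv_X, mul_comm, add_comm] using hp.fun_mul hasDerivAt_coord

/-- The unnormalized standard Gaussian density `y ↦ exp (-|y|² / 2)`, the weight against which
harmonic polynomials are integrated. -/
noncomputable def gaussianWeight {E : Type*} [Norm E] (y : E) : ℝ := Real.exp (-‖y‖ ^ 2 / 2)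

lemma continuous_gaussianWeight {E : Type*} [SeminormedAddCommGroup E] :
    Continuous (gaussianWeight (E := E)) := by
  unfold gaussianWeight
  fun_prop

lemma hasLineDerivAt_gaussianWeight {E : Type*} [NormedAddCommGroup E] [InnerProductSpace ℝ E]
    (y v : E) : HasLineDerivAt ℝ gaussianWeight (-⟪v, y⟫ * gaussianWeight y) y v := by
  have norm_sq_deriv := (hasStrictFDerivAt_norm_sq y).hasFDerivAt
  convert (norm_sq_deriv.fun_neg.mul_const (2⁻¹ : ℝ)).exp.hasLineDerivAt v using 1
  · ext x
    simp only [gaussianWeight, div_eq_mul_inv]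
  · simp [gaussianWeight, real_inner_comm v y, div_eq_mul_inv, mul_comm]

lemma integrable_gaussianWeight_mul_norm_pow {E : Type*} [NormedAddCommGroup E] [NormedSpace ℝ E]
    [FiniteDimensional ℝ E] [Nontrivial E] [MeasurableSpace E] [BorelSpace E] (μ : Measure E)
    [μ.IsAddHaarMeasure] (k : ℕ) : Integrable (fun y => gaussianWeight y * ‖y‖ ^ k) μ := by
  refine (integrable_fun_norm_addHaar μ (f := fun r => Real.exp (-r ^ 2 / 2) * r ^ k)).2 ?_
  have exponent_gt : (-1 : ℝ) < (Module.finrank ℝ E - 1 + k : ℕ) :=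
    neg_one_lt_zero.trans_le (Nat.cast_nonneg _)
  refine (integrableOn_rpow_mul_exp_neg_mul_sq one_half_pos exponent_gt).congr_fun
    (fun r _ => ?_) measurableSet_Ioi
  simp only [Real.rpow_natCast, smul_eq_mul, pow_add]
  ring_nf

lemma continuous_eval_euclidean {ι : Type*} (p : MvPolynomial ι ℝ) :
    Continuous fun y : EuclideanSpace ℝ ι => eval y p :=
  (continuous_eval p).comp (PiLp.continuous_ofLp 2 _)

variable {ι : Type*} [Fintype ι]

lemma integrable_gaussianWeight_mul_eval [Nonempty ι] (p : MvPolynomial ι ℝ) :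
    Integrable fun y : EuclideanSpace ℝ ι => gaussianWeight y * eval y p := by
  suffices h : ∀ k : ℕ, Integrable fun y : EuclideanSpace ℝ ι =>
      gaussianWeight y * ‖y‖ ^ k * eval y p by simpa using h 0
  induction p using MvPolynomial.induction_on with
  | C a =>
    intro k
    simpa using (integrable_gaussianWeight_mul_norm_pow volume k).mul_const a
  | add p q hp hq =>
    intro k
    simp only [map_add, mul_add]
    exact (hp k).add (hq k)
  | mul_X p i hp =>
    intro k
    refine (hp (k + 1)).mono ?_ (ae_of_all _ fun y => ?_)
    · exact ((continuous_gaussianWeight.mul (continuous_norm.pow k)).mul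
        (continuous_eval_euclidean _)).aestronglyMeasurable
    · have coord_le : |y i| ≤ ‖y‖ := PiLp.norm_apply_le y i
      simp only [map_mul, eval_X, norm_mul, norm_pow, norm_norm, Real.norm_eq_abs (y i)]
      rw [mul_comm _ |y i|, ← mul_assoc, pow_succ, ← mul_assoc ‖gaussianWeight y‖]
      gcongr

lemma integral_gaussianWeight_mul_dirDeriv [Nonempty ι] (v : ι → ℝ) (p : MvPolynomial ι ℝ) :
    ∫ y : EuclideanSpace ℝ ι, gaussianWeight y * eval y (dirDeriv v p) =
      ∫ y : EuclideanSpace ℝ ι, gaussianWeight y * eval y (linearForm v * p) := by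
  have weight_deriv (y : EuclideanSpace ℝ ι) : HasLineDerivAt ℝ gaussianWeight
      (-(gaussianWeight y * eval y (linearForm v))) y (WithLp.toLp 2 v) := by
    have inner_eq : ⟪WithLp.toLp 2 v, y⟫ = eval y (linearForm v) := by
      rw [eval_linearForm, dotProduct_comm]
      exact EuclideanSpace.inner_eq_star_dotProduct _ _
    rw [mul_comm, ← neg_mul, ← inner_eq]
    exact hasLineDerivAt_gaussianWeight y _
  have neg_integrand (y : EuclideanSpace ℝ ι) :
      -(gaussianWeight y * eval y (linearForm v)) * eval y p =
        -(gaussianWeight y * eval y (linearForm v * p)) := by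
    rw [map_mul, neg_mul, mul_assoc]
  have parts := integral_bilinear_hasLineDerivAt_right_eq_neg_left_of_integrable
    (μ := (volume : Measure (EuclideanSpace ℝ ι))) (B := ContinuousLinearMap.mul ℝ ℝ)
    (g := fun y => eval y p) (g' := fun y => eval y (dirDeriv v p))
    (by simp only [ContinuousLinearMap.mul_apply', neg_integrand]
        exact (integrable_gaussianWeight_mul_eval _).neg)
    (integrable_gaussianWeight_mul_eval _) (integrable_gaussianWeight_mul_eval _)
    (fun y _ => weight_deriv y) (fun y _ => hasLineDerivAt_eval p y v)
  simpa only [ContinuousLinearMap.mul_apply', neg_integrand, integral_neg, neg_neg] using parts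

lemma integral_gaussianWeight_mul_polyLaplacian [Nonempty ι] {k : ℕ} {p : MvPolynomial ι ℝ}
    (hp : p.IsHomogeneous k) :
    ∫ y : EuclideanSpace ℝ ι, gaussianWeight y * eval y (polyLaplacian ι ℝ p) =
      k * ∫ y : EuclideanSpace ℝ ι, gaussianWeight y * eval y p := by
  classical
  have parts (j : ι) := integral_gaussianWeight_mul_dirDeriv (Pi.single j 1) (pderiv j p)
  simp only [dirDeriv_single, linearForm_single] at parts
  calc ∫ y : EuclideanSpace ℝ ι, gaussianWeight y * eval y (polyLaplacian ι ℝ p)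
      = ∑ j, ∫ y : EuclideanSpace ℝ ι, gaussianWeight y * eval y (pderiv j (pderiv j p)) := by
        simp only [polyLaplacian_apply, map_sum, Finset.mul_sum]
        exact integral_finsetSum _ fun j _ => integrable_gaussianWeight_mul_eval _
    _ = ∫ y : EuclideanSpace ℝ ι, gaussianWeight y * eval y (∑ j, X j * pderiv j p) := by
        simp only [parts, map_sum, Finset.mul_sum]
        exact (integral_finsetSum _ fun j _ => integrable_gaussianWeight_mul_eval _).symm
    _ = k * ∫ y : EuclideanSpace ℝ ι, gaussianWeight y * eval y p := by
        simp only [hp.sum_X_mul_pderiv, nsmul_eq_mul, map_mul, map_natCast,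
          mul_left_comm _ (k : ℝ), integral_const_mul]

end GaussianIntegral

section SphereIntegral

open MvPolynomial

lemma integral_norm_mul_eq_toSphere_mul {E : Type*} [NormedAddCommGroup E] [NormedSpace ℝ E]
    [FiniteDimensional ℝ E] [Nontrivial E] [MeasurableSpace E] [BorelSpace E] (μ : Measure E)
    [μ.IsAddHaarMeasure] (w : ℝ → ℝ) {F : E → ℝ} {k : ℕ}
    (hF : ∀ r : ℝ, 0 < r → ∀ y, F (r • y) = r ^ k * F y) :
    ∫ y, w ‖y‖ * F y ∂μ = (∫ u, F u ∂μ.toSphere) *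
      ∫ r : Set.Ioi (0 : ℝ), w r * r ^ k ∂Measure.volumeIoiPow (Module.finrank ℝ E - 1) := calc
  ∫ y, w ‖y‖ * F y ∂μ = ∫ y in {0}ᶜ, w ‖y‖ * F y ∂μ := by rw [restrict_compl_singleton]
  _ = ∫ y : ({0}ᶜ : Set E), w ‖(y : E)‖ * F y ∂μ.comap Subtype.val :=
    (integral_subtype_comap (measurableSet_singleton _).compl fun y => w ‖y‖ * F y).symm
  _ = ∫ y : ({0}ᶜ : Set E), F (homeomorphUnitSphereProd E y).1 *
        (w (homeomorphUnitSphereProd E y).2 * (homeomorphUnitSphereProd E y).2 ^ k)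
        ∂μ.comap Subtype.val := by
    refine integral_congr_ae (ae_of_all _ fun y => ?_)
    have norm_pos : 0 < ‖(y : E)‖ := norm_pos_iff.2 y.2
    have F_eq : F y = ‖(y : E)‖ ^ k * F (‖(y : E)‖⁻¹ • (y : E)) := by
      rw [← hF _ norm_pos, smul_inv_smul₀ norm_pos.ne']
    simp only [homeomorphUnitSphereProd_apply_fst_coe, homeomorphUnitSphereProd_apply_snd_coe, F_eq]
    ring
  _ = ∫ z, F z.1 * (w z.2 * z.2 ^ k)
        ∂μ.toSphere.prod (Measure.volumeIoiPow (Module.finrank ℝ E - 1)) :=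
    μ.measurePreserving_homeomorphUnitSphereProd.integral_comp
      (Homeomorph.measurableEmbedding _) fun z => F z.1 * (w z.2 * (z.2 : ℝ) ^ k)
  _ = _ := integral_prod_mul (fun u : Metric.sphere (0 : E) 1 => F u)
    fun r : Set.Ioi (0 : ℝ) => w r * (r : ℝ) ^ k

lemma toSphere_integral_eq_zero_of_integral_gaussianWeight_mul_eq_zero {E : Type*}
    [NormedAddCommGroup E] [NormedSpace ℝ E] [FiniteDimensional ℝ E] [Nontrivial E]
    [MeasurableSpace E] [BorelSpace E] (μ : Measure E) [μ.IsAddHaarMeasure] {F : E → ℝ} {k : ℕ}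
    (hF : ∀ r : ℝ, 0 < r → ∀ y, F (r • y) = r ^ k * F y)
    (integral_eq_zero : ∫ y, gaussianWeight y * F y ∂μ = 0) : ∫ u, F u ∂μ.toSphere = 0 := by
  -- The radial factor does not depend on `F`, so it is computed from `F = ‖·‖ ^ k`.
  obtain ⟨y₀, y₀_ne⟩ := exists_ne (0 : E)
  have norm_pow_pos : 0 < ∫ y : E, gaussianWeight y * ‖y‖ ^ k ∂μ :=
    integral_pos_of_integrable_nonneg_nonzero (x := y₀)
      (continuous_gaussianWeight.mul (continuous_norm.pow k))
      (integrable_gaussianWeight_mul_norm_pow μ k)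
      (fun y => mul_nonneg (Real.exp_nonneg _) (pow_nonneg (norm_nonneg y) k))
      (mul_ne_zero (Real.exp_ne_zero _) (pow_ne_zero k (norm_ne_zero_iff.2 y₀_ne)))
  have polar_F := integral_norm_mul_eq_toSphere_mul μ (fun r => Real.exp (-r ^ 2 / 2)) hF
  have polar_norm_pow := integral_norm_mul_eq_toSphere_mul μ (fun r => Real.exp (-r ^ 2 / 2))
    (F := fun y => ‖y‖ ^ k)
    fun r hr y => by rw [norm_smul, Real.norm_of_nonneg hr.le, mul_pow]
  have radial_ne_zero := right_ne_zero_of_mul (polar_norm_pow.symm.trans_ne norm_pow_pos.ne')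
  exact (mul_eq_zero.1 (polar_F.symm.trans integral_eq_zero)).resolve_right radial_ne_zero

lemma toSphere_integral_eval_eq_zero {ι : Type*} [Fintype ι] [Nonempty ι] {k : ℕ} (hk : k ≠ 0)
    {p : MvPolynomial ι ℝ} (p_hom : p.IsHomogeneous k) (p_harm : polyLaplacian ι ℝ p = 0) :
    ∫ u, eval (u : EuclideanSpace ℝ ι) p ∂(volume : Measure (EuclideanSpace ℝ ι)).toSphere = 0 := by
  refine toSphere_integral_eq_zero_of_integral_gaussianWeight_mul_eq_zero volume
    (F := fun y : EuclideanSpace ℝ ι => eval y p)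
    (fun r _ y => eval_smul_of_isHomogeneous p_hom r y) ?_
  have euler := integral_gaussianWeight_mul_polyLaplacian p_hom
  simp only [p_harm, map_zero, mul_zero, integral_zero] at euler
  exact (mul_eq_zero.1 euler.symm).resolve_left (Nat.cast_ne_zero.2 hk)

end SphereIntegral

section DesignBound

variable {n τ : ℕ} {C : Finset (Metric.sphere (0 : EuclideanSpace ℝ (Fin n)) 1)}

lemma inner_eq_dotProduct {ι : Type*} [Fintype ι] (x y : EuclideanSpace ℝ ι) :
    ⟪x, y⟫ = x.ofLp ⬝ᵥ y.ofLp := by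
  rw [EuclideanSpace.inner_eq_star_dotProduct, dotProduct_comm, star_trivial]

lemma sphere_dotProduct_self {ι : Type*} [Fintype ι]
    (x : Metric.sphere (0 : EuclideanSpace ℝ ι) 1) : x.1.ofLp ⬝ᵥ x.1.ofLp = 1 := by
  rw [← inner_eq_dotProduct, inner_self_eq_one_of_norm_eq_one (norm_eq_of_mem_sphere x)]

lemma sum_sum_geg_inner_nonneg (hn : 2 ≤ n)
    (C : Finset (Metric.sphere (0 : EuclideanSpace ℝ (Fin n)) 1)) (i : ℕ) :
    0 ≤ ∑ x ∈ C, ∑ y ∈ C, geg n i ⟪(x : EuclideanSpace ℝ (Fin n)), y⟫ := by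
  have : Nontrivial (Fin n) := Fin.nontrivial_iff_two_le.2 hn
  simpa [inner_eq_dotProduct] using
    sum_sum_geg_nonneg C (fun _ => 1) (v := fun x => x.1.ofLp)
      (fun x _ => sphere_dotProduct_self x) i

lemma IsSphericalDesign.sum_geg_inner_eq_zero (hn : 2 ≤ n) (hC : IsSphericalDesign n τ C) {i : ℕ}
    (hi : i ≠ 0) (hiτ : i ≤ τ) (x : Metric.sphere (0 : EuclideanSpace ℝ (Fin n)) 1) :
    ∑ y ∈ C, geg n i ⟪(x : EuclideanSpace ℝ (Fin n)), y⟫ = 0 := by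
  have : Nontrivial (Fin n) := Fin.nontrivial_iff_two_le.2 hn
  rcases C.eq_empty_or_nonempty with rfl | C_nonempty
  · exact Finset.sum_empty
  have zonal_hom := isHomogeneous_zonalHarmonic x.1.ofLp i
  have average := hC _ (zonal_hom.totalDegree_le.trans hiτ)
  rw [sphereMeasure, integral_smul_measure,
    toSphere_integral_eval_eq_zero hi zonal_hom (polyLaplacian_zonalHarmonic _ i), smul_zero,
    div_eq_zero_iff, or_iff_left (Nat.cast_ne_zero.2 C_nonempty.card_ne_zero)] at average
  rw [← average]
  refine Finset.sum_congr rfl fun y _ => ?_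
  rw [eval_zonalHarmonic (sphere_dotProduct_self x) (sphere_dotProduct_self y), Fintype.card_fin,
    inner_eq_dotProduct]

lemma card_mul_le_sum_sum_inner {E : Type*} [NormedAddCommGroup E] [InnerProductSpace ℝ E]
    (C : Finset (Metric.sphere (0 : E) 1)) {f : ℝ → ℝ} (hf : ∀ t ∈ Set.Icc (-1 : ℝ) 1, 0 ≤ f t) :
    C.card * f 1 ≤ ∑ x ∈ C, ∑ y ∈ C, f ⟪(x : E), y⟫ := by
  rw [← nsmul_eq_mul]
  refine Finset.card_nsmul_le_sum _ _ _ fun x hx => ?_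
  calc f 1 = f ⟪(x : E), x⟫ := by
        rw [inner_self_eq_one_of_norm_eq_one (norm_eq_of_mem_sphere x)]
    _ ≤ ∑ y ∈ C, f ⟪(x : E), y⟫ :=
        Finset.single_le_sum (f := fun y : Metric.sphere (0 : E) 1 => f ⟪(x : E), y⟫)
          (fun y _ => hf _ (real_inner_mem_Icc_of_norm_eq_one (norm_eq_of_mem_sphere x)
            (norm_eq_of_mem_sphere y))) hx

lemma IsSphericalDesign.sum_sum_gegenbauer_expansion_le (hn : 2 ≤ n)
    (hC : IsSphericalDesign n τ C) {m : ℕ} {c : ℕ → ℝ} (hc : ∀ i, τ < i → i ≤ m → c i ≤ 0) :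
    ∑ x ∈ C, ∑ y ∈ C, ∑ i ∈ Finset.range (m + 1),
      c i * geg n i ⟪(x : EuclideanSpace ℝ (Fin n)), y⟫ ≤ c 0 * (C.card * C.card) := by
  have moment_nonpos (i : ℕ) (hi : i ∈ Finset.range m) : c (i + 1) *
      ∑ x ∈ C, ∑ y ∈ C, geg n (i + 1) ⟪(x : EuclideanSpace ℝ (Fin n)), y⟫ ≤ 0 := by
    rcases le_or_gt (i + 1) τ with le_τ | gt_τ
    · simp only [hC.sum_geg_inner_eq_zero hn i.succ_ne_zero le_τ, Finset.sum_const_zero, mul_zero,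
        le_refl]
    · exact mul_nonpos_of_nonpos_of_nonneg (hc _ gt_τ (Finset.mem_range.1 hi))
        (sum_sum_geg_inner_nonneg hn C (i + 1))
  calc ∑ x ∈ C, ∑ y ∈ C, ∑ i ∈ Finset.range (m + 1),
        c i * geg n i ⟪(x : EuclideanSpace ℝ (Fin n)), y⟫
      = ∑ i ∈ Finset.range (m + 1),
          c i * ∑ x ∈ C, ∑ y ∈ C, geg n i ⟪(x : EuclideanSpace ℝ (Fin n)), y⟫ := by
        simp only [Finset.mul_sum, Finset.sum_comm (t := Finset.range (m + 1))]
    _ ≤ c 0 * ∑ x ∈ C, ∑ y ∈ C, geg n 0 ⟪(x : EuclideanSpace ℝ (Fin n)), y⟫ := by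
        rw [Finset.sum_range_succ']
        exact add_le_of_nonpos_left (Finset.sum_nonpos moment_nonpos)
    _ = c 0 * (C.card * C.card) := by
        simp only [geg, Finset.sum_const, nsmul_eq_mul, mul_one]

end DesignBound

theorem LP_bound_spherical_designs (n τ : ℕ) (hn : 2 ≤ n) (hτ : 1 ≤ τ)
    (f : ℝ → ℝ) (m : ℕ) (c : ℕ → ℝ)
    (hf : ∀ t : ℝ, f t = ∑ i ∈ Finset.range (m + 1), c i * geg n i t)
    (hB1 : ∀ t ∈ Set.Icc (-1 : ℝ) 1, 0 ≤ f t)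
    (hB2a : 0 < c 0) (hB2b : ∀ i : ℕ, τ < i → i ≤ m → c i ≤ 0)
    (C : Finset (Metric.sphere (0 : EuclideanSpace ℝ (Fin n)) 1)) (hC : C.Nonempty)
    (hdesign : IsSphericalDesign n τ C) :
    f 1 / c 0 ≤ (C.card : ℝ) := by
  have card_pos : (0 : ℝ) < C.card := Nat.cast_pos.2 hC.card_pos
  have double_count : C.card * f 1 ≤ C.card * (C.card * c 0) := calc
    C.card * f 1 ≤ ∑ x ∈ C, ∑ y ∈ C, f ⟪(x : EuclideanSpace ℝ (Fin n)), y⟫ :=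
      card_mul_le_sum_sum_inner C hB1
    _ ≤ c 0 * (C.card * C.card) := by
      simpa only [hf] using hdesign.sum_sum_gegenbauer_expansion_le hn hB2b
    _ = C.card * (C.card * c 0) := by ring
  exact (div_le_iff₀ hB2a).2 (le_of_mul_le_mul_left double_count card_pos)
end
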